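/- Let k ⊂ K ⊂ L be a tower of finite fields with [L:K] = 2, |k| odd. Then the norm map N_{L/k} : L^× → k^× sends every element of K^× to a square in k^×; consequently it induces a well-defined surjective group homomorphism L^×/K^× → k^×/(k^×)^2, whose kernel has cardinality (|K|+1)/2. -/

import Mathlib

/-!
In a tower `k ⊆ K ⊆ L` with `n = [L : K]`, transitivity of the norm gives
`N_{L/k}(x) = N_{K/k}(x) ^ n` for `x ∈ K`, so `N_{L/k}` descends to a homomorphism
`Lˣ ⧸ Kˣ → kˣ ⧸ (kˣ)ⁿ`. For finite fields the norm is surjective, hence so is the induced map, and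
its kernel is counted by dividing `|Lˣ ⧸ Kˣ| = 1 + |K| + ⋯ + |K| ^ (n - 1)` by the index
`gcd (|k| - 1, n)` of the `n`-th powers in the cyclic group `kˣ`.
-/

theorem card_ker_mul_card_of_surjective {G H : Type*} [Group G] [Group H] (f : G →* H)
    (hf : Function.Surjective f) : Nat.card f.ker * Nat.card H = Nat.card G := by
  rw [← f.ker.card_mul_index, Subgroup.index_ker, f.range_eq_top_of_surjective hf,
    Subgroup.card_top]

theorem card_mul_index_range_of_injective {G H : Type*} [Group G] [Group H] (f : G →* H)
    (hf : Function.Injective f) : Nat.card G * f.range.index = Nat.card H := by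
  rw [← f.range.card_mul_index, ← Nat.card_congr (f.ofInjective hf).toEquiv]

section Ring

variable (R S A : Type*) [CommRing R] [CommRing S] [CommRing A]
  [Algebra R S] [Algebra S A] [Algebra R A] [IsScalarTower R S A]
  [Module.Free R S] [Module.Free S A]

variable {S} in
theorem norm_algebraMap_eq_norm_pow_finrank (x : S) :
    Algebra.norm R (algebraMap S A x) = Algebra.norm R x ^ Module.finrank S A := by
  rw [← Algebra.norm_norm (S := S), Algebra.norm_algebraMap, map_pow]

theorem range_unitsMap_algebraMap_le_comap_norm :
    (Units.map (algebraMap S A).toMonoidHom).range ≤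
      (powMonoidHom (Module.finrank S A) : Rˣ →* Rˣ).range.comap
        (Units.map (Algebra.norm R : A →* R)) := by
  rintro _ ⟨u, rfl⟩
  exact ⟨Units.map (Algebra.norm R) u,
    Units.ext (norm_algebraMap_eq_norm_pow_finrank R A (u : S)).symm⟩

/-- The homomorphism `Aˣ ⧸ Sˣ → Rˣ ⧸ (Rˣ)ⁿ` induced by the norm of `A` over `R`, where `n` is the
rank of `A` over `S`. The subgroup `Sˣ` is encoded as the range of `Sˣ → Aˣ`, and `(Rˣ)ⁿ` as the
range of the `n`-th power map. -/
noncomputable def unitsNormQuotient :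
    (Aˣ ⧸ (Units.map (algebraMap S A).toMonoidHom).range) →*
      (Rˣ ⧸ (powMonoidHom (Module.finrank S A) : Rˣ →* Rˣ).range) :=
  QuotientGroup.map _ _ (Units.map (Algebra.norm R : A →* R))
    (range_unitsMap_algebraMap_le_comap_norm R S A)

variable {A} in
theorem unitsNormQuotient_mk (x : Aˣ) :
    unitsNormQuotient R S A (QuotientGroup.mk x) =
      QuotientGroup.mk (Units.map (Algebra.norm R : A →* R) x) :=
  QuotientGroup.map_mk _ _ _ _ x

end Ring

section FiniteField

theorem index_range_unitsMap_algebraMap (K L : Type*) [Field K] [Field L] [Algebra K L]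
    [Finite L] :
    (Units.map (algebraMap K L).toMonoidHom).range.index =
      ∑ i ∈ Finset.range (Module.finrank K L), Nat.card K ^ i := by
  have : Finite K := Finite.of_injective _ (algebraMap K L).injective
  have one_lt_card : 1 < Nat.card K := Finite.one_lt_card
  refine Nat.eq_of_mul_eq_mul_left (Nat.sub_pos_of_lt one_lt_card) ?_
  calc (Nat.card K - 1) * (Units.map (algebraMap K L).toMonoidHom).range.index
      = Nat.card Lˣ := by
        rw [← Nat.card_units]
        exact card_mul_index_range_of_injective _ (Units.map_injective (algebraMap K L).injective)
    _ = Nat.card K ^ Module.finrank K L - 1 := by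
        rw [Nat.card_units, Module.natCard_eq_pow_finrank (K := K)]
    _ = (Nat.card K - 1) * ∑ i ∈ Finset.range (Module.finrank K L), Nat.card K ^ i := by
        rw [mul_comm, geom_sum_mul_of_one_le one_lt_card.le]

theorem index_range_powMonoidHom_units (k : Type*) [Field k] [Finite k] (n : ℕ) :
    (powMonoidHom n : kˣ →* kˣ).range.index = (Nat.card k - 1).gcd n := by
  rw [IsCyclic.index_powMonoidHom_range, Nat.card_units]

variable (k K L : Type*) [Field k] [Field K] [Field L]
  [Algebra k K] [Algebra K L] [Algebra k L] [IsScalarTower k K L] [Finite L]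

theorem unitsNormQuotient_surjective : Function.Surjective (unitsNormQuotient k K L) :=
  QuotientGroup.map_surjective_of_surjective _ _ _
    (QuotientGroup.mk_surjective.comp (FiniteField.unitsMap_norm_surjective k L)) _

theorem card_ker_unitsNormQuotient :
    Nat.card (unitsNormQuotient k K L).ker =
      (∑ i ∈ Finset.range (Module.finrank K L), Nat.card K ^ i) /
        (Nat.card k - 1).gcd (Module.finrank K L) := by
  have : Finite k := Finite.of_injective _ (algebraMap k L).injective
  rw [← index_range_unitsMap_algebraMap, ← index_range_powMonoidHom_units]
  exact Nat.eq_div_of_mul_eq_left Subgroup.index_ne_zero_of_finite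
    (card_ker_mul_card_of_surjective _ (unitsNormQuotient_surjective k K L))

theorem stmt_2_general {n : ℕ} (hn : Module.finrank K L = n) :
    (∀ x : K, ∃ y : k, Algebra.norm k (algebraMap K L x) = y ^ n) ∧
    ∃ φ : (Lˣ ⧸ (Units.map (algebraMap K L).toMonoidHom).range) →*
        (kˣ ⧸ (powMonoidHom n : kˣ →* kˣ).range),
      Function.Surjective φ ∧
      (∀ x : Lˣ, φ (QuotientGroup.mk x) =
        QuotientGroup.mk (Units.map (Algebra.norm k : L →* k) x)) ∧
      Nat.card φ.ker =
        (∑ i ∈ Finset.range n, Nat.card K ^ i) / (Nat.card k - 1).gcd n := by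
  subst hn
  exact ⟨fun x ↦ ⟨_, norm_algebraMap_eq_norm_pow_finrank k L x⟩, unitsNormQuotient k K L,
    unitsNormQuotient_surjective k K L, unitsNormQuotient_mk k K,
    card_ker_unitsNormQuotient k K L⟩

end FiniteField

/-- For a tower of finite fields `k ⊆ K ⊆ L` with `[L:K] = 2` and `|k|` odd,
the norm `N_{L/k}` sends `K^×` into the squares of `k^×`, and induces a
well-defined surjective homomorphism `L^×/K^× → k^×/(k^×)²` whose kernel has
cardinality `(|K|+1)/2`. -/
theorem stmt_2 (k K L : Type*) [Field k] [Field K] [Field L]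
    [Algebra k K] [Algebra K L] [Algebra k L] [IsScalarTower k K L]
    [Fintype k] [Fintype K] [Fintype L]
    [DecidableEq k] [DecidableEq K] [DecidableEq L]
    (hodd : Odd (Fintype.card k))
    (hdim : Module.finrank K L = 2) :
    (∀ x : K, x ≠ 0 → ∃ y : k, Algebra.norm k (algebraMap K L x) = y ^ 2) ∧
    ∃ φ : (Lˣ ⧸ (Units.map (algebraMap K L).toMonoidHom).range) →*
        (kˣ ⧸ (powMonoidHom 2 : kˣ →* kˣ).range),
      Function.Surjective φ ∧
      (∀ x : Lˣ, φ (QuotientGroup.mk x) =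
        QuotientGroup.mk (Units.map (Algebra.norm k : L →* k) x)) ∧
      Nat.card φ.ker = (Fintype.card K + 1) / 2 := by
  have two_dvd : 2 ∣ Fintype.card k - 1 := (hodd.tsub_odd odd_one).two_dvd
  obtain ⟨norm_eq_sq, φ, φ_surjective, φ_mk, card_ker⟩ := stmt_2_general k K L hdim
  exact ⟨fun x _ ↦ norm_eq_sq x, φ, φ_surjective, φ_mk, by
    simpa [Finset.sum_range_succ, Nat.gcd_eq_right two_dvd, add_comm] using card_ker⟩
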